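/- Let C be an abelian category with Ext groups, let S be a class of objects closed under cones and cocones, and let (X,ω) be a left Frobenius pair cut on S. Then (X, ω^∧) is a left weak AB context cut on S. -/

import Mathlib

/-!
Write `G = ω ∩ S`. The hypotheses make `G` behave like a class of projective generators for `ω`,
so finite `ω`-resolutions can be handled as projective resolutions are.

An `ω`-resolution of length `n` may be rebuilt, with the same length, so that all its terms but
the leftmost lie in `G` (`ProjGen.hasResLength_gres`). For such resolutions `Ext¹(G, ω^∧) = 0`
gives a horseshoe argument, so `ω^∧` is closed under extensions (`ProjGen.gres_ext`); lifting
idempotents gives closure under direct summands (`ProjGen.gres_summand`), and closure under cones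
follows by composing epimorphisms (`ProjGen.rightThick`).

If the resolved object is in `S`, all syzygies are in `S`, as `S` is closed under cocones, so the
leftmost term is in `G` as well. Hence `ω^∧ ∩ S = G^∧`. The same theory applied to `G`, which
generates itself, shows that this class is right thick; this detour is needed because `S` is not
assumed closed under extensions or summands.

Finally, `Ext¹(𝒳 ∩ S, G^∧) = 0` splits the embedding of an object of `𝒳 ∩ ω^∧ ∩ S` into an object
of `G`, so `𝒳 ∩ ω^∧ ∩ S = G`, and the Frobenius conditions for `(𝒳, 𝒳 ∩ ω^∧)` reduce to those
for `(𝒳, ω)`.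
-/

open CategoryTheory

universe w v u

variable {C : Type u} [Category.{v} C] [Abelian C]

/-- `IsSES A B X` : there is a short exact sequence `0 → A → B → X → 0` in `C`. -/
def IsSES (A B X : C) : Prop :=
  ∃ (f : A ⟶ B) (g : B ⟶ X) (zero : f ≫ g = 0),
    (ShortComplex.mk f g zero).ShortExact

/-- `P` is closed under extensions. -/
def ClosedUnderExtensions (P : C → Prop) : Prop :=
  ∀ ⦃A B X : C⦄, IsSES A B X → P A → P X → P B

/-- `P` is closed under cones. -/
def ClosedUnderCones (P : C → Prop) : Prop :=
  ∀ ⦃A B X : C⦄, IsSES A B X → P A → P B → P X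

/-- `P` is closed under cocones. -/
def ClosedUnderCocones (P : C → Prop) : Prop :=
  ∀ ⦃A B X : C⦄, IsSES A B X → P B → P X → P A

/-- `P` is closed under isomorphisms. -/
def ClosedUnderIsos (P : C → Prop) : Prop :=
  ∀ ⦃X Y : C⦄, (X ≅ Y) → P X → P Y

/-- `P` is closed under direct summands. -/
def ClosedUnderSummands (P : C → Prop) : Prop :=
  ∀ ⦃X Y : C⦄, P X → (∃ (i : Y ⟶ X) (r : X ⟶ Y), i ≫ r = 𝟙 Y) → P Y

/-- `HasResLength P n M` : there is an exact sequence `0 → W_n → ⋯ → W_0 → M → 0`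
with all `W_i` in `P`. -/
inductive HasResLength (P : C → Prop) : ℕ → C → Prop
  | of_iso {M W : C} (hW : P W) (e : M ≅ W) : HasResLength P 0 M
  | step {K W M : C} {n : ℕ} (hW : P W) (h : IsSES K W M)
      (hK : HasResLength P n K) : HasResLength P (n + 1) M

/-- `P^∧` : the class of objects admitting a finite `P`-resolution. -/
def ResClass (P : C → Prop) : C → Prop := fun M => ∃ n, HasResLength P n M

/-- The resolution dimension `resdim_P(M) ∈ ℕ∞`. -/
noncomputable def resDim (P : C → Prop) (M : C) : ℕ∞ :=
  sInf {n : ℕ∞ | ∃ m : ℕ, n = (m : ℕ∞) ∧ HasResLength P m M}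

/-- `HasCoresLength P n M` : there is an exact sequence `0 → M → W_0 → ⋯ → W_n → 0`
with all `W_i` in `P`. -/
inductive HasCoresLength (P : C → Prop) : ℕ → C → Prop
  | of_iso {M W : C} (hW : P W) (e : M ≅ W) : HasCoresLength P 0 M
  | step {M W K : C} {n : ℕ} (hW : P W) (h : IsSES M W K)
      (hK : HasCoresLength P n K) : HasCoresLength P (n + 1) M

/-- `ω ∩ S` is a relative generator in `ω` : every `W ∈ ω` fits in a short exact
sequence `0 → W' → F → W → 0` with `F ∈ ω ∩ S` and `W' ∈ ω`. -/
def RelGenerator (ω S : C → Prop) : Prop :=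
  ∀ ⦃W : C⦄, ω W → ∃ (W' F : C), ω W' ∧ (ω F ∧ S F) ∧ IsSES W' F W

/-- `P` is left thick : closed under extensions, direct summands and cocones. -/
def LeftThick (P : C → Prop) : Prop :=
  ClosedUnderExtensions P ∧ ClosedUnderSummands P ∧ ClosedUnderCocones P

/-- `P` is right thick : closed under extensions, direct summands and cones. -/
def RightThick (P : C → Prop) : Prop :=
  ClosedUnderExtensions P ∧ ClosedUnderSummands P ∧ ClosedUnderCones P

/-- The smallest thick class (closed under extensions, direct summands, cones and
cocones) containing `P`. -/
inductive ThickClosure (P : C → Prop) : C → Prop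
  | of {M : C} (h : P M) : ThickClosure P M
  | ext {A B X : C} (h : IsSES A B X) (hA : ThickClosure P A) (hX : ThickClosure P X) :
      ThickClosure P B
  | cone {A B X : C} (h : IsSES A B X) (hA : ThickClosure P A) (hB : ThickClosure P B) :
      ThickClosure P X
  | cocone {A B X : C} (h : IsSES A B X) (hB : ThickClosure P B) (hX : ThickClosure P X) :
      ThickClosure P A
  | summand {X Y : C} (hX : ThickClosure P X) (i : Y ⟶ X) (r : X ⟶ Y) (hir : i ≫ r = 𝟙 Y) :
      ThickClosure P Y

section WithExt

variable [HasExt.{w} C]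

/-- `Ext^i(A, B) = 0` for all `A ∈ P`, `B ∈ Q` and all `i ≥ 1`. -/
def ExtVanish (P Q : C → Prop) : Prop :=
  ∀ ⦃A B : C⦄, P A → Q B → ∀ i : ℕ, 1 ≤ i → Subsingleton (Abelian.Ext A B i)

/-- `(X, ω)` is a left Frobenius pair in `C`. -/
def IsLeftFrobenius (X ω : C → Prop) : Prop :=
  LeftThick X ∧ (∀ ⦃W : C⦄, ω W → X W) ∧ ClosedUnderSummands ω ∧
    ExtVanish X ω ∧
    (∀ ⦃A : C⦄, X A → ∃ (W A' : C), ω W ∧ X A' ∧ IsSES A W A')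

/-- `(X, ω)` is a left Frobenius pair cut on `S`. -/
def IsLeftFrobeniusCut (X ω S : C → Prop) : Prop :=
  LeftThick X ∧
  IsLeftFrobenius (fun M => X M ∧ S M) (fun M => ω M ∧ S M) ∧
  (ExtVanish (fun M => ω M ∧ S M) ω ∧ RelGenerator ω S) ∧
  (ClosedUnderExtensions ω ∧ ClosedUnderSummands ω)

/-- `(A, B)` is a left weak AB context cut on `S`. -/
def IsLeftWeakABCut (A B S : C → Prop) : Prop :=
  IsLeftFrobeniusCut A (fun M => A M ∧ B M) S ∧
  RightThick (fun M => B M ∧ S M) ∧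
  (∀ ⦃M : C⦄, B M → S M → ResClass (fun N => A N ∧ S N) M)

/-- `(U, V)` is a left 1-cotorsion pair cut on `T`. -/
def IsLeft1CotorsionCut (U V T : C → Prop) : Prop :=
  ClosedUnderSummands U ∧
  (∀ ⦃A B : C⦄, U A → T A → V B → Subsingleton (Abelian.Ext A B 1)) ∧
  (∀ ⦃t : C⦄, T t → ∃ (K A : C), U A ∧ (∃ V' : C, V V' ∧ Nonempty (K ≅ V')) ∧ IsSES K A t)

/-- `(U, V)` is a right 1-cotorsion pair cut on `T`. -/
def IsRight1CotorsionCut (U V T : C → Prop) : Prop :=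
  ClosedUnderSummands V ∧
  (∀ ⦃A B : C⦄, U A → V B → T B → Subsingleton (Abelian.Ext A B 1)) ∧
  (∀ ⦃t : C⦄, T t → ∃ (B W : C), V B ∧ (∃ U' : C, U U' ∧ Nonempty (W ≅ U')) ∧ IsSES t B W)

/-- `(U, V)` is a 1-cotorsion pair cut on `T`. -/
def Is1CotorsionCut (U V T : C → Prop) : Prop :=
  IsLeft1CotorsionCut U V T ∧ IsRight1CotorsionCut U V T

/-- `(A, B)` is a left `n`-cotorsion pair cut on `S`. -/
def IsLeftNCotorsionCut (n : ℕ) (A B S : C → Prop) : Prop :=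
  ClosedUnderSummands A ∧
  (∀ ⦃X Y : C⦄, A X → S X → B Y → ∀ i : ℕ, 1 ≤ i → i ≤ n → Subsingleton (Abelian.Ext X Y i)) ∧
  (∀ ⦃s : C⦄, S s → ∃ (K X : C), A X ∧ (∃ m : ℕ, m ≤ n - 1 ∧ HasResLength B m K) ∧ IsSES K X s)

/-- `(A, B)` is a right `n`-cotorsion pair cut on `S`. -/
def IsRightNCotorsionCut (n : ℕ) (A B S : C → Prop) : Prop :=
  ClosedUnderSummands B ∧
  (∀ ⦃X Y : C⦄, A X → B Y → S Y → ∀ i : ℕ, 1 ≤ i → i ≤ n → Subsingleton (Abelian.Ext X Y i)) ∧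
  (∀ ⦃s : C⦄, S s → ∃ (Y W : C), B Y ∧ (∃ m : ℕ, m ≤ n - 1 ∧ HasCoresLength A m W) ∧ IsSES s Y W)

/-- `(F, G)` is a complete cotorsion pair in `T`. -/
def IsCompleteCotorsionPairIn (T F G : C → Prop) : Prop :=
  (∀ ⦃M : C⦄, F M → T M) ∧ (∀ ⦃M : C⦄, G M → T M) ∧
  ClosedUnderSummands F ∧ ClosedUnderSummands G ∧
  (∀ ⦃A B : C⦄, F A → G B → Subsingleton (Abelian.Ext A B 1)) ∧
  (∀ ⦃M : C⦄, T M →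
    (∃ G₁ F₁ : C, G G₁ ∧ F F₁ ∧ IsSES G₁ F₁ M) ∧
    (∃ G₂ F₂ : C, G G₂ ∧ F F₂ ∧ IsSES M G₂ F₂))

end WithExt

open CategoryTheory.Limits
open scoped ZeroObject

/-! ### Short exact sequences -/

/-- A short exact sequence, unbundled so that exactness in the middle is a lifting property. -/
theorem isSES_iff {A B X : C} : IsSES A B X ↔
    ∃ (f : A ⟶ B) (g : B ⟶ X), Mono f ∧ Epi g ∧ f ≫ g = 0 ∧
      ∀ ⦃T : C⦄ (x : T ⟶ B), x ≫ g = 0 → ∃ t : T ⟶ A, t ≫ f = x := by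
  constructor
  · rintro ⟨f, g, w, h⟩
    have : Mono f := h.mono_f
    exact ⟨f, g, h.mono_f, h.epi_g, w, fun T x hx => h.exact.lift' x hx⟩
  · rintro ⟨f, g, hf, hg, w, h⟩
    refine ⟨f, g, w, ?_⟩
    have hex : (ShortComplex.mk f g w).Exact := by
      rw [ShortComplex.exact_iff_exact_up_to_refinements]
      intro T x hx
      obtain ⟨t, ht⟩ := h x hx
      exact ⟨T, 𝟙 T, inferInstance, t, by simpa using ht.symm⟩
    exact { exact := hex, mono_f := hf, epi_g := hg }

theorem isSES_kernel {B X : C} (g : B ⟶ X) [Epi g] : IsSES (kernel g) B X :=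
  isSES_iff.2 ⟨kernel.ι g, g, inferInstance, inferInstance, by simp,
    fun _ x hx => ⟨kernel.lift g x hx, by simp⟩⟩

theorem isSES_zero_left (M : C) : IsSES (0 : C) M M :=
  isSES_iff.2 ⟨0, 𝟙 M, ⟨fun _ _ _ => (isZero_zero C).eq_of_tgt _ _⟩, inferInstance, by simp,
    fun _ x hx => ⟨0, by simpa using hx.symm⟩⟩

theorem isSES_biprod (A B : C) : IsSES A (A ⊞ B) B :=
  ⟨biprod.inl, biprod.snd, by simp,
    (ShortComplex.Splitting.ofHasBinaryBiproduct A B).shortExact⟩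

/-- The two kernels of a composite of epimorphisms `F ⟶ W ⟶ M`: the kernel `L` of the composite is
an extension of `ker (W ⟶ M)` by `ker (F ⟶ W)`. -/
theorem isSES_comp {W' F W K M : C} (h₁ : IsSES W' F W) (h₂ : IsSES K W M) :
    ∃ L : C, IsSES W' L K ∧ IsSES L F M := by
  obtain ⟨i, p, hi, hp, hip, hl⟩ := isSES_iff.1 h₁
  obtain ⟨k, q, hk, hq, hkq, hl'⟩ := isSES_iff.1 h₂
  have hw : (0 : W' ⟶ K) ≫ k = i ≫ p := by rw [zero_comp, hip]
  have e₁ : pullback.lift 0 i hw ≫ pullback.fst k p = 0 := pullback.lift_fst _ _ _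
  have e₂ : pullback.lift 0 i hw ≫ pullback.snd k p = i := pullback.lift_snd _ _ _
  refine ⟨pullback k p, isSES_iff.2 ⟨pullback.lift 0 i hw, pullback.fst k p,
    mono_of_mono_fac e₂, inferInstance, e₁, ?_⟩, isSES_iff.2 ⟨pullback.snd k p, p ≫ q,
    inferInstance, epi_comp _ _, ?_, ?_⟩⟩
  · intro T x hx
    have hx' : (x ≫ pullback.snd k p) ≫ p = 0 := by
      rw [Category.assoc, ← pullback.condition, reassoc_of% hx, zero_comp]
    obtain ⟨t, ht⟩ := hl _ hx'
    refine ⟨t, pullback.hom_ext ?_ ?_⟩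
    · rw [Category.assoc, e₁, comp_zero, hx]
    · rw [Category.assoc, e₂, ht]
  · rw [← pullback.condition_assoc, hkq, comp_zero]
  · intro T x hx
    obtain ⟨t, ht⟩ := hl' (x ≫ p) (by rw [Category.assoc, hx])
    exact ⟨pullback.lift t x ht, pullback.lift_snd _ _ _⟩

theorem isSES_biprod_right {K F A : C} (h : IsSES K F A) (Z : C) :
    IsSES K (F ⊞ Z) (A ⊞ Z) := by
  obtain ⟨k, p, hk, hp, hkp, hl⟩ := isSES_iff.1 h
  refine isSES_iff.2 ⟨k ≫ biprod.inl, biprod.map p (𝟙 Z), mono_comp _ _, inferInstance, ?_, ?_⟩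
  · rw [Category.assoc, biprod.inl_map, reassoc_of% hkp, zero_comp]
  · intro T x hx
    have h₁ : (x ≫ biprod.fst) ≫ p = 0 := by
      simpa using hx =≫ biprod.fst
    have h₂ : x ≫ biprod.snd = 0 := by
      simpa using hx =≫ biprod.snd
    obtain ⟨t, ht⟩ := hl _ h₁
    exact ⟨t, biprod.hom_ext _ _ (by simp [ht]) (by simp [h₂])⟩

/-- If `q : F ⟶ X` lifts through `B ⟶ X`, the pullback of the two maps is `A ⊞ F`, which gives
a presentation of `B` with kernel `K`. -/
theorem isSES_of_lift {A B X K F : C} {f : A ⟶ B} {g : B ⟶ X} [Mono f] (hfg : f ≫ g = 0)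
    (hl : ∀ ⦃T : C⦄ (x : T ⟶ B), x ≫ g = 0 → ∃ t : T ⟶ A, t ≫ f = x)
    {k : K ⟶ F} {q : F ⟶ X} [Mono k] [Epi q] (hkq : k ≫ q = 0)
    (hl' : ∀ ⦃T : C⦄ (x : T ⟶ F), x ≫ q = 0 → ∃ t : T ⟶ K, t ≫ k = x)
    (s : F ⟶ B) (hs : s ≫ g = q) : IsSES K (A ⊞ F) B := by
  obtain ⟨l, hlf⟩ := hl (k ≫ s) (by rw [Category.assoc, hs, hkq])
  refine isSES_iff.2 ⟨biprod.lift (-l) k, biprod.desc f s, ?_, ?_, ?_, ?_⟩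
  · exact mono_of_mono_fac (biprod.lift_snd (-l) k)
  · rw [epi_iff_surjective_up_to_refinements]
    intro T y
    obtain ⟨T', π, hπ, x, hx⟩ := surjective_up_to_refinements_of_epi q (y ≫ g)
    obtain ⟨a, ha⟩ := hl (π ≫ y - x ≫ s) (by
      rw [Preadditive.sub_comp, Category.assoc, Category.assoc, hs, hx, sub_self])
    exact ⟨T', π, hπ, biprod.lift a x, by simp [ha]⟩
  · simp [hlf]
  · intro T x hx
    have hx' : (x ≫ biprod.fst) ≫ f + (x ≫ biprod.snd) ≫ s = 0 := by
      rw [biprod.desc_eq] at hx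
      simpa using hx
    obtain ⟨t, ht⟩ := hl' (x ≫ biprod.snd) (by
      have := hx' =≫ g
      simpa [hfg, hs] using this)
    refine ⟨t, biprod.hom_ext _ _ ?_ (by simpa using ht)⟩
    rw [← cancel_mono f, eq_neg_of_add_eq_zero_left hx', Category.assoc t, biprod.lift_fst,
      Preadditive.comp_neg, Preadditive.neg_comp, Category.assoc, hlf, ← ht, Category.assoc]

theorem of_iso_of_summands {P : C → Prop} (hP : ClosedUnderSummands P) {M W : C} (e : M ≅ W)
    (hW : P W) : P M :=
  hP hW ⟨e.hom, e.inv, e.hom_inv_id⟩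

/-- Suppose the idempotent `r ≫ i` of `M` with image `Y` lifts along `p : F ⟶ M` to an
endomorphism `φ` of `F`. Then `x ↦ (x, φ x)` embeds `ker (F ⟶ M ⟶ Y)` into `F ⊞ ker p` as a
retract, with retraction `(y, z) ↦ y - φ y + z`. -/
theorem retract_kernel {K F M Y : C} {k : K ⟶ F} {p : F ⟶ M} [Mono k] (hkp : k ≫ p = 0)
    (hl : ∀ ⦃T : C⦄ (x : T ⟶ F), x ≫ p = 0 → ∃ t : T ⟶ K, t ≫ k = x)
    (i : Y ⟶ M) (r : M ⟶ Y) (hir : i ≫ r = 𝟙 Y)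
    (φ : F ⟶ F) (hφ : φ ≫ p = p ≫ r ≫ i) :
    ∃ (a : kernel (p ≫ r) ⟶ F ⊞ K) (b : F ⊞ K ⟶ kernel (p ≫ r)), a ≫ b = 𝟙 _ := by
  obtain ⟨t, ht⟩ := hl (kernel.ι (p ≫ r) ≫ φ) (by
    have := kernel.condition (p ≫ r) =≫ i
    rwa [zero_comp, Category.assoc, Category.assoc, ← hφ, ← Category.assoc] at this)
  refine ⟨biprod.lift (kernel.ι _) t, biprod.desc
    (kernel.lift (p ≫ r) (𝟙 F - φ) ?_) (kernel.lift (p ≫ r) k ?_), ?_⟩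
  · simp [Preadditive.sub_comp, reassoc_of% hφ, hir]
  · rw [reassoc_of% hkp, zero_comp]
  · rw [← cancel_mono (kernel.ι (p ≫ r))]
    simp [Preadditive.comp_sub, ht]

/-! ### Vanishing of extension groups -/

section Ext

variable [HasExt.{w} C]

/-- Vanishing of `Ext¹(A, K)` lifts maps out of `A` along epimorphisms with kernel `K`. -/
theorem exists_lift_of_ext {A K B X : C} {f : K ⟶ B} {g : B ⟶ X} [Mono f] [Epi g]
    (w : f ≫ g = 0)
    (hl : ∀ ⦃T : C⦄ (x : T ⟶ B), x ≫ g = 0 → ∃ t : T ⟶ K, t ≫ f = x)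
    (hE : Subsingleton (Abelian.Ext A K 1)) (q : A ⟶ X) : ∃ s : A ⟶ B, s ≫ g = q := by
  have hS : (ShortComplex.mk f g w).ShortExact :=
    { exact := by
        rw [ShortComplex.exact_iff_exact_up_to_refinements]
        intro T x hx
        obtain ⟨t, ht⟩ := hl x hx
        exact ⟨T, 𝟙 T, inferInstance, t, by simpa using ht.symm⟩
      mono_f := inferInstance
      epi_g := inferInstance }
  obtain ⟨x, hx⟩ := Abelian.Ext.covariant_sequence_exact₃ A hS (Abelian.Ext.mk₀ q)
    (zero_add 1) (hE.elim _ _)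
  obtain ⟨s, rfl⟩ := (Abelian.Ext.mk₀_bijective _ _).2 x
  refine ⟨s, (Abelian.Ext.mk₀_bijective _ _).1 ?_⟩
  rw [← hx, Abelian.Ext.mk₀_comp_mk₀]

/-- Dimension shifting in the second variable. -/
theorem ext_subsingleton_of_isSES {A K W M : C} (h : IsSES K W M) (i : ℕ)
    (hW : Subsingleton (Abelian.Ext A W i)) (hK : Subsingleton (Abelian.Ext A K (i + 1))) :
    Subsingleton (Abelian.Ext A M i) := by
  obtain ⟨f, g, w, hS⟩ := h
  refine subsingleton_of_forall_eq 0 fun x => ?_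
  obtain ⟨y, rfl⟩ := Abelian.Ext.covariant_sequence_exact₃ A hS x rfl (hK.elim _ _)
  rw [hW.elim y 0, Abelian.Ext.zero_comp]

theorem extVanish_hasResLength {P ω : C → Prop} (hω : ClosedUnderSummands ω)
    (hP : ExtVanish P ω) {n : ℕ} {M : C} (hM : HasResLength ω n M) :
    ∀ ⦃A : C⦄, P A → ∀ i : ℕ, 1 ≤ i → Subsingleton (Abelian.Ext A M i) := by
  induction hM with
  | of_iso hW e => exact fun A hA => hP hA (of_iso_of_summands hω e hW)
  | step hW h _ ih =>
    intro A hA i hi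
    exact ext_subsingleton_of_isSES h i (hP hA hW i hi) (ih hA (i + 1) (by omega))

/-- `Ext`-vanishing in the second variable passes from `ω` to `ω^∧`. -/
theorem extVanish_resClass {P ω : C → Prop} (hω : ClosedUnderSummands ω)
    (hP : ExtVanish P ω) : ExtVanish P (ResClass ω) :=
  fun _ _ hA ⟨_, hM⟩ => extVanish_hasResLength hω hP hM hA

/-! ### Resolutions with relatively projective terms -/

/-- `G` is an `ω`-projective relative generator in `ω`, and both classes are closed under
extensions; `ω` is moreover closed under direct summands. -/
structure ProjGen (ω G : C → Prop) : Prop where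
  le : ∀ ⦃M : C⦄, G M → ω M
  gen : ∀ ⦃W : C⦄, ω W → ∃ K F : C, ω K ∧ G F ∧ IsSES K F W
  vanish : ExtVanish G ω
  ext_gen : ClosedUnderExtensions G
  ext : ClosedUnderExtensions ω
  summand : ClosedUnderSummands ω

/-- Objects with a resolution `0 → W → F_{n-1} → ⋯ → F_0 → M → 0` where `W ∈ ω` and all
`F_i ∈ G`: only the leftmost term is allowed outside `G`. -/
def GRes (ω G : C → Prop) : ℕ → C → Prop
  | 0 => ω
  | n + 1 => fun M => ∃ K F : C, G F ∧ IsSES K F M ∧ GRes ω G n K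

namespace ProjGen

variable {ω G : C → Prop}

theorem gres_succ (h : ProjGen ω G) {n : ℕ} : ∀ {M : C}, GRes ω G n M → GRes ω G (n + 1) M := by
  induction n with
  | zero =>
    intro M hM
    obtain ⟨K, F, hK, hF, hs⟩ := h.gen hM
    exact ⟨K, F, hF, hs, hK⟩
  | succ n ih =>
    rintro M ⟨K, F, hF, hs, hK⟩
    exact ⟨K, F, hF, hs, ih hK⟩

theorem gres_mono (h : ProjGen ω G) {m n : ℕ} (hmn : m ≤ n) {M : C} (hM : GRes ω G m M) :
    GRes ω G n M := by
  induction hmn with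
  | refl => exact hM
  | step _ ih => exact h.gres_succ ih

theorem gres_hasResLength (h : ProjGen ω G) {n : ℕ} :
    ∀ {M : C}, GRes ω G n M → HasResLength ω n M := by
  induction n with
  | zero => exact fun hM => .of_iso hM (Iso.refl _)
  | succ n ih =>
    rintro M ⟨K, F, hF, hs, hK⟩
    exact .step (h.le hF) hs (ih hK)

/-- Horseshoe argument: since `Ext¹(G, ω^∧) = 0`, the generator covering the right-hand term
lifts to the middle term. -/
theorem gres_ext (h : ProjGen ω G) (n : ℕ) : ClosedUnderExtensions (GRes ω G n) := by
  induction n with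
  | zero => exact h.ext
  | succ n ih =>
    rintro A B X hs hA ⟨KX, FX, hFX, hsX, hKX⟩
    have hE := extVanish_hasResLength h.summand h.vanish (h.gres_hasResLength hA) hFX 1 le_rfl
    obtain ⟨KA, FA, hFA, hsA, hKA⟩ := hA
    obtain ⟨f, g, hf, hg, hfg, hl⟩ := isSES_iff.1 hs
    obtain ⟨k, q, hk, hq, hkq, hl'⟩ := isSES_iff.1 hsX
    obtain ⟨s, hsq⟩ := exists_lift_of_ext hfg hl hE q
    obtain ⟨L, h₁, h₂⟩ := isSES_comp (isSES_biprod_right hsA FX)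
      (isSES_of_lift hfg hl hkq hl' s hsq)
    exact ⟨L, FA ⊞ FX, h.ext_gen (isSES_biprod FA FX) hFA hFX, h₂, ih h₁ hKA hKX⟩

/-- Every finite `ω`-resolution can be replaced by one of the same length with all terms but the
last in `G`. -/
theorem hasResLength_gres (h : ProjGen ω G) {n : ℕ} {M : C} (hM : HasResLength ω n M) :
    GRes ω G n M := by
  induction hM with
  | of_iso hW e => exact of_iso_of_summands h.summand e hW
  | @step K W M n hW hs _ ih =>
    obtain ⟨W', F, hW', hF, hs'⟩ := h.gen hW
    obtain ⟨L, h₁, h₂⟩ := isSES_comp hs' hs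
    have hW'n : GRes ω G n W' := h.gres_mono (Nat.zero_le n) hW'
    exact ⟨L, F, hF, h₂, h.gres_ext n h₁ hW'n ih⟩

theorem resClass_iff (h : ProjGen ω G) {M : C} : ResClass ω M ↔ ∃ n, GRes ω G n M :=
  exists_congr fun _ => ⟨h.hasResLength_gres, h.gres_hasResLength⟩

/-- The idempotent of `M` cutting out a summand lifts to the generator `F` covering `M`, so the
kernel of `F ⟶ Y` is a retract of `F ⊞ K`, and the length of the resolution drops. -/
theorem gres_summand (h : ProjGen ω G) (n : ℕ) : ClosedUnderSummands (GRes ω G n) := by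
  induction n with
  | zero => exact h.summand
  | succ n ih =>
    rintro M Y ⟨K, F, hF, hs, hK⟩ ⟨i, r, hir⟩
    have hE := extVanish_hasResLength h.summand h.vanish (h.gres_hasResLength hK) hF 1 le_rfl
    obtain ⟨k, p, hk, hp, hkp, hl⟩ := isSES_iff.1 hs
    obtain ⟨φ, hφ⟩ := exists_lift_of_ext hkp hl hE (p ≫ r ≫ i)
    obtain ⟨a, b, hab⟩ := retract_kernel hkp hl i r hir φ hφ
    have : Epi r := epi_of_epi_fac hir
    have hFn : GRes ω G n F := h.gres_mono (Nat.zero_le n) (h.le hF)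
    exact ⟨kernel (p ≫ r), F, hF, isSES_kernel _,
      ih (h.gres_ext n (isSES_biprod F K) hFn hK) ⟨a, b, hab⟩⟩

theorem rightThick (h : ProjGen ω G) : RightThick (ResClass ω) := by
  have hext : ClosedUnderExtensions (ResClass ω) := by
    intro A B X hs hA hX
    rw [h.resClass_iff] at *
    obtain ⟨m, hm⟩ := hA
    obtain ⟨n, hn⟩ := hX
    exact ⟨max m n, h.gres_ext _ hs (h.gres_mono (le_max_left _ _) hm)
      (h.gres_mono (le_max_right _ _) hn)⟩
  refine ⟨hext, ?_, ?_⟩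
  · intro M Y hM hY
    rw [h.resClass_iff] at *
    obtain ⟨n, hn⟩ := hM
    exact ⟨n, h.gres_summand n hn hY⟩
  · intro A B X hs hA hB
    obtain ⟨n, hn⟩ := h.resClass_iff.1 hB
    obtain ⟨K, F, hF, hsB, hK⟩ := h.gres_succ hn
    obtain ⟨L, h₁, h₂⟩ := isSES_comp hsB hs
    obtain ⟨m, hm⟩ := hext h₁ (h.resClass_iff.2 ⟨n, hK⟩) hA
    exact ⟨m + 1, .step (h.le hF) h₂ hm⟩

end ProjGen

end Ext

/-! ### Resolutions by objects of `S` -/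

theorem HasResLength.mono {P Q : C → Prop} (hPQ : ∀ ⦃M : C⦄, P M → Q M) {n : ℕ} {M : C}
    (hM : HasResLength P n M) : HasResLength Q n M := by
  induction hM with
  | of_iso hW e => exact .of_iso (hPQ hW) e
  | step hW hs _ ih => exact .step (hPQ hW) hs ih

theorem HasResLength.of_cones {P S : C → Prop} (hP : ClosedUnderSummands P)
    (hPS : ∀ ⦃M : C⦄, P M → S M) (hS : ClosedUnderCones S) {n : ℕ} {M : C}
    (hM : HasResLength P n M) : S M := by
  induction hM with
  | of_iso hW e => exact hPS (of_iso_of_summands hP e hW)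
  | step hW hs _ ih => exact hS hs ih (hPS hW)

/-- If the resolved object lies in `S`, so do all syzygies, hence also the leftmost term. -/
theorem gres_inter {ω S : C → Prop} (hS : ClosedUnderCocones S) {n : ℕ} :
    ∀ {M : C}, GRes ω (fun N => ω N ∧ S N) n M → S M →
      HasResLength (fun N => ω N ∧ S N) n M := by
  induction n with
  | zero => exact fun hM hSM => .of_iso ⟨hM, hSM⟩ (Iso.refl _)
  | succ n ih =>
    rintro M ⟨K, F, hF, hs, hK⟩ hSM
    exact .step hF hs (ih hK (hS hs hF.2 hSM))

theorem stmt_7 [HasExt.{w} C] (𝒳 ω S : C → Prop)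
    (hScone : ClosedUnderCones S) (hScocone : ClosedUnderCocones S)
    (hF : IsLeftFrobeniusCut 𝒳 ω S) :
    IsLeftWeakABCut 𝒳 (ResClass ω) S := by
  obtain ⟨hX, ⟨hXS, hle, hsum, hvan, hemb⟩, ⟨hproj, hgen⟩, hωext, hωsum⟩ := hF
  have hG : ClosedUnderExtensions (fun M => ω M ∧ S M) := fun A B X hs hA hB =>
    ⟨hωext hs hA.1 hB.1, (hXS.1 hs (hle hA) (hle hB)).2⟩
  have hPG : ProjGen ω (fun M => ω M ∧ S M) :=
    { le := fun _ hM => hM.1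
      gen := hgen
      vanish := hproj
      ext_gen := hG
      ext := hωext
      summand := hωsum }
  -- The class `ω ∩ S` generates itself, so the same theory describes `(ω ∩ S)^∧`.
  have hPG' : ProjGen (fun M => ω M ∧ S M) (fun M => ω M ∧ S M) :=
    { le := fun _ hM => hM
      gen := fun W hW => ⟨0, W, hsum hW ⟨0, 0, (isZero_zero C).eq_of_src _ _⟩, hW,
        isSES_zero_left W⟩
      vanish := fun _ _ hA hB => hproj hA hB.1
      ext_gen := hG
      ext := hG
      summand := hsum }
  have hcut : (fun M => ResClass ω M ∧ S M) = ResClass (fun M => ω M ∧ S M) := by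
    funext M
    refine propext ⟨?_, ?_⟩
    · rintro ⟨hM, hSM⟩
      obtain ⟨n, hn⟩ := hPG.resClass_iff.1 hM
      exact ⟨n, gres_inter hScocone hn hSM⟩
    · rintro ⟨n, hn⟩
      exact ⟨⟨n, hn.mono fun _ h => h.1⟩, hn.of_cones hsum (fun _ h => h.2) hScone⟩
  have hcut' : ∀ {M : C}, ResClass ω M → S M → ResClass (fun M => ω M ∧ S M) M :=
    fun h₁ h₂ => (congrFun hcut _).mp ⟨h₁, h₂⟩
  have hthick := hPG.rightThick
  have hthick' := hPG'.rightThick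
  have hvan' := extVanish_resClass hsum hvan
  have hωres : ∀ ⦃M : C⦄, ω M → ResClass ω M := fun M hM => ⟨0, .of_iso hM (Iso.refl _)⟩
  -- An object of `𝒳 ∩ ω^∧ ∩ S` embeds into an object of `ω ∩ S` with cokernel in `𝒳 ∩ S`;
  -- this sequence splits because `Ext¹(𝒳 ∩ S, (ω ∩ S)^∧) = 0`.
  have hcore : ∀ ⦃M : C⦄, (𝒳 M ∧ ResClass ω M) ∧ S M → ω M ∧ S M := by
    rintro M ⟨⟨hXM, hM⟩, hSM⟩
    obtain ⟨W, A', hW, hA', hs⟩ := hemb ⟨hXM, hSM⟩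
    obtain ⟨f, g, hf, hg, hfg, hl⟩ := isSES_iff.1 hs
    obtain ⟨s, hsg⟩ := exists_lift_of_ext hfg hl
      (hvan' hA' (hcut' hM hSM) 1 le_rfl) (𝟙 A')
    obtain ⟨r, hr⟩ := hl (𝟙 W - g ≫ s) (by simp [Preadditive.sub_comp, hsg])
    refine hsum hW ⟨f, r, ?_⟩
    rw [← cancel_mono f, Category.assoc, hr, Preadditive.comp_sub, reassoc_of% hfg]
    simp
  refine ⟨⟨hX, ⟨hXS, ?_, ?_, ?_, ?_⟩, ⟨?_, ?_⟩, ?_, ?_⟩, ?_, ?_⟩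
  · exact fun M hM => ⟨hM.1.1, hM.2⟩
  · rintro M Y hM hY
    have h₁ := hsum (hcore hM) hY
    exact ⟨⟨hX.2.1 hM.1.1 hY, hωres h₁.1⟩, h₁.2⟩
  · exact fun A B hA hB => hvan hA (hcore hB)
  · intro A hA
    obtain ⟨W, A', hW, hA', hs⟩ := hemb hA
    exact ⟨W, A', ⟨⟨(hle hW).1, hωres hW.1⟩, hW.2⟩, hA', hs⟩
  · exact fun A B hA hB => extVanish_resClass hωsum hproj (hcore hA) hB.2
  · rintro N ⟨hXN, hN⟩
    obtain ⟨n, hn⟩ := hPG.resClass_iff.1 hN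
    obtain ⟨K, F, hF, hs, hK⟩ := hPG.gres_succ hn
    have hXF := (hle hF).1
    exact ⟨K, F, ⟨hX.2.2 hs hXF hXN, hPG.resClass_iff.2 ⟨n, hK⟩⟩,
      ⟨⟨hXF, hωres hF.1⟩, hF.2⟩, hs⟩
  · exact fun A B X hs hA hB => ⟨hX.1 hs hA.1 hB.1, hthick.1 hs hA.2 hB.2⟩
  · exact fun M Y hM hY => ⟨hX.2.1 hM.1 hY, hthick.2.1 hM.2 hY⟩
  · rw [hcut]
    exact hthick'
  · intro M hM hSM
    obtain ⟨n, hn⟩ := hcut' hM hSM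
    exact ⟨n, hn.mono hle⟩
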